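/- arXiv:2105.05420 — 2 statements merged into one kernel-verified Lean document; each statement's English description precedes it below -/
import Mathlib

section
/- Let a fusion datum be given on a countable type I. For every γ ∈ I, the formula (L_γ f)(β) := (1/(d γ))·Σ_η (N γ η β)·f(η) (a finite sum for each fixed β) defines a bounded linear operator L_γ on ℓ²(I) with operator norm at most 1; in particular ‖l_γ f‖₂ ≤ ‖f‖₂ for every finitely supported f : I → ℂ. -/
open scoped BigOperators
open Filter
open scoped Classical

/-- A fusion datum on a type `I`: unit, structure constants, involution and a
dimension function satisfying the unit laws, Frobenius reciprocity and
multiplicativity of the dimension function. -/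
structure FusionDatum (I : Type*) where
  e : I
  N : I → I → I → ℕ
  conj : I → I
  d : I → ℝ
  conj_e : conj e = e
  conj_conj : ∀ α, conj (conj α) = α
  N_conj : ∀ α β γ, N α β γ = N (conj β) (conj α) (conj γ)
  one_le_d : ∀ α, 1 ≤ d α
  d_conj : ∀ α, d (conj α) = d α
  N_unit_left : ∀ α γ, N e α γ = if γ = α then 1 else 0
  N_unit_right : ∀ α γ, N α e γ = if γ = α then 1 else 0
  frobenius₁ : ∀ α β γ, N α β γ = N γ (conj β) α
  frobenius₂ : ∀ α β γ, N α β γ = N (conj α) γ β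
  mul_support_finite : ∀ α β, (Function.support fun γ => (N α β γ : ℝ) * d γ).Finite
  d_mul : ∀ α β, (∑ᶠ γ, (N α β γ : ℝ) * d γ) = d α * d β

/-- Weighted cardinality `|S|_w = Σ_{α∈S} (d α)²` of a set. -/
noncomputable def FusionDatum.wcard {I : Type*} (F : FusionDatum I) (S : Set I) : ℝ :=
  ∑ᶠ α ∈ S, F.d α ^ 2

/-- Right γ-boundary `∂_γ S`. -/
def FusionDatum.rBoundary {I : Type*} (F : FusionDatum I) (γ : I) (S : Set I) : Set I :=
  {α | (α ∈ S ∧ ∃ β ∉ S, 0 < F.N α γ β) ∨ (α ∉ S ∧ ∃ β ∈ S, 0 < F.N α γ β)}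

/-- Left γ-boundary `∂ᴸ_γ S`. -/
def FusionDatum.lBoundary {I : Type*} (F : FusionDatum I) (γ : I) (S : Set I) : Set I :=
  {α | (α ∈ S ∧ ∃ β ∉ S, 0 < F.N γ α β) ∨ (α ∉ S ∧ ∃ β ∈ S, 0 < F.N γ α β)}

/-- ℓ²-norm `(Σ_β |g β|²)^{1/2}` of a (finitely supported) function. -/
noncomputable def l2norm {I : Type*} (g : I → ℂ) : ℝ :=
  Real.sqrt (∑ᶠ β, ‖g β‖ ^ 2)

/-- The convolution operator `l_γ`. -/
noncomputable def FusionDatum.lconv {I : Type*} (F : FusionDatum I) (γ : I) (f : I → ℂ) :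
    I → ℂ :=
  fun β => (1 / (F.d γ : ℂ)) * ∑ᶠ η, (F.N γ η β : ℂ) * f η

/-- A state on a unital C*-algebra: a unital positive linear functional. -/
structure CStarState (A : Type*) [NormedRing A] [StarRing A] [NormedAlgebra ℂ A] where
  toFun : A →ₗ[ℂ] ℂ
  map_one : toFun 1 = 1
  pos : ∀ a : A, 0 ≤ (toFun (star a * a)).re ∧ (toFun (star a * a)).im = 0

/-- A CFA-type action of a fusion datum on a unital C*-algebra: `T α a` encodes `χ(α)·a`. -/
structure CFAAction {I : Type*} (F : FusionDatum I) (A : Type*)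
    [NormedRing A] [StarRing A] [NormedAlgebra ℂ A] where
  T : I → A →ₗ[ℂ] A
  map_star : ∀ α a, T α (star a) = star (T α a)
  norm_le : ∀ α a, ‖T α a‖ ≤ F.d α * ‖a‖
  map_one : ∀ α, T α 1 = (F.d α : ℂ) • (1 : A)
  comp_eq : ∀ α β a, T α (T β a) = ∑ᶠ γ, (F.N α β γ) • T γ a

/-- `⟨f|f⟩_A = Σ_α f α · (f α)*`. -/
noncomputable def innerA {I A : Type*} [NormedRing A] [StarRing A] (f : I → A) : A :=
  ∑ᶠ α, f α * star (f α)

/-- `‖f‖_{2,A} = ‖⟨f|f⟩_A‖^{1/2}`. -/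
noncomputable def norm2A {I A : Type*} [NormedRing A] [StarRing A] (f : I → A) : ℝ :=
  Real.sqrt ‖innerA f‖

/-- Twisted convolution `(δ_γ *_σ f)(β) = (1/(d γ))·Σ_η N γ η β · σ_γ(f η)`. -/
noncomputable def FusionDatum.tconv {I A : Type*} [NormedRing A] [NormedAlgebra ℂ A]
    (F : FusionDatum I) (σ : I → A → A) (γ : I) (f : I → A) : I → A :=
  fun β => (((F.d γ)⁻¹ : ℝ) : ℂ) • ∑ᶠ η, (F.N γ η β) • σ γ (f η)

/-- The ℂ-valued Følner vectors `ξ_F = |F|_w^{-1/2} Σ_{α∈F} d α · δ_α`. -/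
noncomputable def xiC {I : Type*} (F : FusionDatum I) (S : Finset I) : I → ℂ :=
  fun α => if α ∈ S then (((Real.sqrt (F.wcard (S : Set I)))⁻¹ * F.d α : ℝ) : ℂ) else 0

/-- The A-valued Følner vectors `ξ_F = |F|_w^{-1/2} Σ_{α∈F} d α · δ_α ⊗ 1_A`. -/
noncomputable def xiA {I : Type*} (F : FusionDatum I) (S : Finset I)
    (A : Type*) [NormedRing A] [NormedAlgebra ℂ A] : I → A :=
  fun α => if α ∈ S then (((Real.sqrt (F.wcard (S : Set I)))⁻¹ * F.d α : ℝ) : ℂ) • (1 : A)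
    else 0

/-!
Multiplicativity of `d` says that the weight `d` is fixed by the transpose of the matrix of `l_γ`,
whose entry in row `β` and column `η` is `N γ η β / d γ`. Frobenius reciprocity identifies this
transpose with the matrix for `conj γ`, as `d (conj γ) = d γ`, so that the matrix itself fixes `d`
as well. The Schur test with weight `d` and both constants equal to `1` then bounds its norm on
`ℓ²` by `1`.
-/

section SchurTest

open scoped NNReal

/-- The hypothesis of the Schur test for the matrix `k`, with weights `v`, `w` and constants `A`
(rows) and `B` (columns). Both bounds are imposed on finite partial sums, so that no summability
has to be assumed. -/
structure IsSchurBounded {κ ι 𝕜 : Type*} [Norm 𝕜] (k : κ → ι → 𝕜) (v : κ → ℝ) (w : ι → ℝ)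
    (A B : ℝ≥0) : Prop where
  weight_pos : ∀ i, 0 < w i
  row_sum_le : ∀ b (T : Finset ι), ∑ i ∈ T, ‖k b i‖ * w i ≤ A * v b
  col_sum_le : ∀ i (S : Finset κ), ∑ b ∈ S, ‖k b i‖ * v b ≤ B * w i

/-- The action of the matrix `k` on functions, `(k f)(b) = ∑ᵢ k b i • f i`; the value is `0` at
those `b` where the series is not summable. -/
noncomputable def kernelTransform {κ ι 𝕜 E : Type*} [AddCommMonoid E] [TopologicalSpace E]
    [SMul 𝕜 E] (k : κ → ι → 𝕜) (f : ι → E) : κ → E :=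
  fun b => ∑' i, k b i • f i

lemma sum_norm_sq_le_norm_sq {ι : Type*} {E : ι → Type*} [∀ i, NormedAddCommGroup (E i)]
    (f : lp E 2) (T : Finset ι) : ∑ i ∈ T, ‖f i‖ ^ 2 ≤ ‖f‖ ^ 2 := by
  simpa using lp.sum_rpow_le_norm_rpow (p := 2) (by norm_num) f T

namespace IsSchurBounded

section Finite

variable {κ ι 𝕜 : Type*} [SeminormedAddCommGroup 𝕜] {k : κ → ι → 𝕜} {v : κ → ℝ} {w : ι → ℝ}
  {A B : ℝ≥0}

lemma sq_sum_norm_mul_le (hk : IsSchurBounded k v w A B) (g : ι → ℝ) (b : κ) (T : Finset ι) :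
    (∑ i ∈ T, ‖k b i‖ * g i) ^ 2 ≤ A * v b * ∑ i ∈ T, ‖k b i‖ * (g i ^ 2 / w i) := by
  have term_nonneg : ∀ i ∈ T, 0 ≤ ‖k b i‖ * (g i ^ 2 / w i) := fun i _ =>
    mul_nonneg (norm_nonneg _) (div_nonneg (sq_nonneg _) (hk.weight_pos i).le)
  have cauchy_schwarz : (∑ i ∈ T, ‖k b i‖ * g i) ^ 2 ≤
      (∑ i ∈ T, ‖k b i‖ * w i) * ∑ i ∈ T, ‖k b i‖ * (g i ^ 2 / w i) := by
    refine Finset.sum_sq_le_sum_mul_sum_of_sq_le_mul T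
      (fun i _ => mul_nonneg (norm_nonneg _) (hk.weight_pos i).le) term_nonneg fun i _ => ?_
    have := hk.weight_pos i
    exact le_of_eq (by field_simp)
  exact cauchy_schwarz.trans
    (mul_le_mul_of_nonneg_right (hk.row_sum_le b T) (Finset.sum_nonneg term_nonneg))

lemma sum_sq_sum_norm_mul_le (hk : IsSchurBounded k v w A B) (g : ι → ℝ) (S : Finset κ)
    (T : Finset ι) :
    ∑ b ∈ S, (∑ i ∈ T, ‖k b i‖ * g i) ^ 2 ≤ A * B * ∑ i ∈ T, g i ^ 2 := by
  calc ∑ b ∈ S, (∑ i ∈ T, ‖k b i‖ * g i) ^ 2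
      ≤ ∑ b ∈ S, A * v b * ∑ i ∈ T, ‖k b i‖ * (g i ^ 2 / w i) :=
        Finset.sum_le_sum fun b _ => hk.sq_sum_norm_mul_le g b T
    _ = ∑ i ∈ T, A * (g i ^ 2 / w i) * ∑ b ∈ S, ‖k b i‖ * v b := by
        simp only [Finset.mul_sum]
        rw [Finset.sum_comm]
        exact Finset.sum_congr rfl fun i _ => Finset.sum_congr rfl fun b _ => by ring
    _ ≤ ∑ i ∈ T, A * (g i ^ 2 / w i) * (B * w i) := by
        refine Finset.sum_le_sum fun i _ => ?_
        have := hk.weight_pos i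
        exact mul_le_mul_of_nonneg_left (hk.col_sum_le i S) (by positivity)
    _ = A * B * ∑ i ∈ T, g i ^ 2 := by
        rw [Finset.mul_sum]
        refine Finset.sum_congr rfl fun i _ => ?_
        have := hk.weight_pos i
        field_simp

lemma sum_sq_sum_norm_mul_norm_le {E : Type*} [NormedAddCommGroup E]
    (hk : IsSchurBounded k v w A B) (f : lp (fun _ : ι => E) 2) (S : Finset κ) (T : Finset ι) :
    ∑ b ∈ S, (∑ i ∈ T, ‖k b i‖ * ‖f i‖) ^ 2 ≤ A * B * ‖f‖ ^ 2 :=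
  (hk.sum_sq_sum_norm_mul_le (fun i => ‖f i‖) S T).trans
    (mul_le_mul_of_nonneg_left (sum_norm_sq_le_norm_sq f T) (by positivity))

end Finite

variable {κ ι 𝕜 E : Type*} [NontriviallyNormedField 𝕜] [NormedAddCommGroup E] [NormedSpace 𝕜 E]
  [CompleteSpace E] {k : κ → ι → 𝕜} {v : κ → ℝ} {w : ι → ℝ} {A B : ℝ≥0}

lemma summable_smul (hk : IsSchurBounded k v w A B) (f : lp (fun _ : ι => E) 2) (b : κ) :
    Summable fun i => k b i • f i := by
  refine Summable.of_norm (summable_of_sum_le (c := √(A * B * ‖f‖ ^ 2))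
    (fun _ => norm_nonneg _) fun T => Real.le_sqrt_of_sq_le ?_)
  simpa only [norm_smul, Finset.sum_singleton] using hk.sum_sq_sum_norm_mul_norm_le f {b} T

lemma sum_norm_kernelTransform_sq_le (hk : IsSchurBounded k v w A B)
    (f : lp (fun _ : ι => E) 2) (S : Finset κ) :
    ∑ b ∈ S, ‖kernelTransform k f b‖ ^ 2 ≤ A * B * ‖f‖ ^ 2 := by
  have partial_sums_tendsto : Tendsto (fun T : Finset ι => ∑ b ∈ S, ‖∑ i ∈ T, k b i • f i‖ ^ 2)
      atTop (nhds (∑ b ∈ S, ‖kernelTransform k f b‖ ^ 2)) :=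
    tendsto_finsetSum S fun b _ => ((hk.summable_smul f b).hasSum.norm).pow 2
  refine le_of_tendsto' partial_sums_tendsto fun T => ?_
  calc ∑ b ∈ S, ‖∑ i ∈ T, k b i • f i‖ ^ 2
      ≤ ∑ b ∈ S, (∑ i ∈ T, ‖k b i‖ * ‖f i‖) ^ 2 := by
        gcongr with b
        exact norm_sum_le_of_le T fun i _ => norm_smul_le _ _
    _ ≤ A * B * ‖f‖ ^ 2 := hk.sum_sq_sum_norm_mul_norm_le f S T

lemma memℓp_kernelTransform (hk : IsSchurBounded k v w A B) (f : lp (fun _ : ι => E) 2) :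
    Memℓp (kernelTransform k f) 2 :=
  memℓp_gen' fun S => by simpa using hk.sum_norm_kernelTransform_sq_le f S

/-- The linear operator on `ℓ²` given by a matrix satisfying the Schur test. -/
noncomputable def toLinearMap (hk : IsSchurBounded k v w A B) :
    lp (fun _ : ι => E) 2 →ₗ[𝕜] lp (fun _ : κ => E) 2 where
  toFun f := ⟨kernelTransform k f, hk.memℓp_kernelTransform f⟩
  map_add' f g := by
    ext b
    simpa only [kernelTransform, lp.coeFn_add, Pi.add_apply, smul_add] using
      (hk.summable_smul f b).tsum_add (hk.summable_smul g b)
  map_smul' c f := by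
    ext b
    simpa only [kernelTransform, lp.coeFn_smul, Pi.smul_apply, smul_comm _ c,
      RingHom.id_apply] using (hk.summable_smul f b).tsum_const_smul c

lemma norm_toLinearMap_apply_le (hk : IsSchurBounded k v w A B) (f : lp (fun _ : ι => E) 2) :
    ‖hk.toLinearMap f‖ ≤ √(A * B) * ‖f‖ := by
  refine lp.norm_le_of_forall_sum_le (by norm_num) (by positivity) fun S => ?_
  have bound := hk.sum_norm_kernelTransform_sq_le f S
  rw [← Real.sq_sqrt (by positivity : (0 : ℝ) ≤ A * B), ← mul_pow] at bound
  simpa using! bound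

/-- The bounded operator on `ℓ²` given by a matrix satisfying the Schur test. -/
noncomputable def toContinuousLinearMap (hk : IsSchurBounded k v w A B) :
    lp (fun _ : ι => E) 2 →L[𝕜] lp (fun _ : κ => E) 2 :=
  hk.toLinearMap.mkContinuous √(A * B) hk.norm_toLinearMap_apply_le

lemma coe_toContinuousLinearMap_apply (hk : IsSchurBounded k v w A B)
    (f : lp (fun _ : ι => E) 2) :
    ⇑(hk.toContinuousLinearMap f) = kernelTransform k f :=
  rfl

lemma norm_toContinuousLinearMap_le (hk : IsSchurBounded k v w A B) :
    ‖(hk.toContinuousLinearMap : lp (fun _ : ι => E) 2 →L[𝕜] lp (fun _ : κ => E) 2)‖ ≤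
      √(A * B) :=
  LinearMap.mkContinuous_norm_le _ (Real.sqrt_nonneg _) _

end IsSchurBounded

end SchurTest

section FiniteSupport

variable {ι : Type*}

lemma memℓp_of_finite_support {E : Type*} [NormedAddCommGroup E] {f : ι → E}
    (hf : f.support.Finite) (p : ENNReal) : Memℓp f p :=
  (memℓp_zero hf).of_exponent_ge zero_le

lemma l2norm_eq_norm (f : lp (fun _ : ι => ℂ) 2) (hf : (⇑f).support.Finite) :
    l2norm f = ‖f‖ := by
  have finite_support_sq : (Function.support fun i => ‖f i‖ ^ 2).Finite :=
    hf.subset fun i hi => by simpa using hi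
  rw [lp.norm_eq_tsum_rpow (by norm_num), l2norm,
    ← tsum_eq_finsum (L := .unconditional ι) finite_support_sq, Real.sqrt_eq_rpow]
  simp

end FiniteSupport

namespace FusionDatum

variable {I : Type*} (F : FusionDatum I)

lemma d_pos (α : I) : 0 < F.d α :=
  one_pos.trans_le (F.one_le_d α)

lemma finite_support_N (γ η : I) : (F.N γ η).support.Finite :=
  (F.mul_support_finite γ η).subset fun β hβ =>
    mul_ne_zero (Nat.cast_ne_zero.2 hβ) (F.d_pos β).ne'

lemma finite_support_N_left (γ β : I) : (Function.support fun η => F.N γ η β).Finite := by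
  simpa only [F.frobenius₂ γ _ β] using! F.finite_support_N (F.conj γ) β

lemma sum_N_mul_d_le (γ η : I) (S : Finset I) :
    ∑ β ∈ S, (F.N γ η β : ℝ) * F.d β ≤ F.d γ * F.d η := by
  have hfin := F.mul_support_finite γ η
  rw [← F.d_mul γ η, ← tsum_eq_finsum (L := .unconditional I) hfin]
  exact (summable_of_hasFiniteSupport hfin).sum_le_tsum S fun β _ =>
    mul_nonneg (Nat.cast_nonneg _) (F.d_pos β).le

lemma sum_N_left_mul_d_le (γ β : I) (T : Finset I) :
    ∑ η ∈ T, (F.N γ η β : ℝ) * F.d η ≤ F.d γ * F.d β := by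
  simpa only [F.frobenius₂ γ _ β, F.d_conj] using F.sum_N_mul_d_le (F.conj γ) β T

/-- The matrix of the convolution operator `l_γ`, with row index `β` and column index `η`. -/
noncomputable def convKernel (γ β η : I) : ℂ :=
  F.N γ η β / F.d γ

lemma norm_convKernel (γ β η : I) : ‖F.convKernel γ β η‖ = F.N γ η β / F.d γ := by
  rw [convKernel, norm_div, Complex.norm_natCast, Complex.norm_of_nonneg (F.d_pos γ).le]

lemma isSchurBounded_convKernel (γ : I) : IsSchurBounded (F.convKernel γ) F.d F.d 1 1 where
  weight_pos := F.d_pos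
  row_sum_le β T := by
    simp only [norm_convKernel, div_mul_eq_mul_div, ← Finset.sum_div, NNReal.coe_one, one_mul]
    exact (div_le_iff₀' (F.d_pos γ)).2 (F.sum_N_left_mul_d_le γ β T)
  col_sum_le η S := by
    simp only [norm_convKernel, div_mul_eq_mul_div, ← Finset.sum_div, NNReal.coe_one, one_mul]
    exact (div_le_iff₀' (F.d_pos γ)).2 (F.sum_N_mul_d_le γ η S)

lemma kernelTransform_convKernel (γ : I) (f : I → ℂ) :
    kernelTransform (F.convKernel γ) f = F.lconv γ f := by
  funext β
  have hfin : (Function.support fun η => (F.N γ η β : ℂ) * f η).Finite :=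
    (F.finite_support_N_left γ β).subset fun η hη =>
      Nat.cast_ne_zero.1 (left_ne_zero_of_mul hη)
  rw [lconv, ← tsum_eq_finsum (L := .unconditional I) hfin, ← tsum_mul_left]
  exact tsum_congr fun η => by rw [convKernel, smul_eq_mul]; ring

lemma finite_support_lconv (γ : I) {f : I → ℂ} (hf : f.support.Finite) :
    (F.lconv γ f).support.Finite := by
  refine (hf.biUnion fun η _ => F.finite_support_N γ η).subset fun β hβ => ?_
  obtain ⟨η, hη⟩ : ∃ η, (F.N γ η β : ℂ) * f η ≠ 0 := by
    by_contra! h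
    exact right_ne_zero_of_mul hβ (finsum_eq_zero_of_forall_eq_zero h)
  exact Set.mem_biUnion (right_ne_zero_of_mul hη) (Nat.cast_ne_zero.1 (left_ne_zero_of_mul hη))

/-- The convolution operator `l_γ` as a bounded operator on `ℓ²(I)`. -/
noncomputable def lconvCLM (γ : I) : lp (fun _ : I => ℂ) 2 →L[ℂ] lp (fun _ : I => ℂ) 2 :=
  (F.isSchurBounded_convKernel γ).toContinuousLinearMap

lemma coe_lconvCLM_apply (γ : I) (f : lp (fun _ : I => ℂ) 2) :
    ⇑(F.lconvCLM γ f) = F.lconv γ f :=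
  ((F.isSchurBounded_convKernel γ).coe_toContinuousLinearMap_apply f).trans
    (F.kernelTransform_convKernel γ f)

lemma norm_lconvCLM_le_one (γ : I) : ‖F.lconvCLM γ‖ ≤ 1 := by
  simpa using! (F.isSchurBounded_convKernel γ).norm_toContinuousLinearMap_le (E := ℂ)

lemma l2norm_lconv_le (γ : I) {f : I → ℂ} (hf : f.support.Finite) :
    l2norm (F.lconv γ f) ≤ l2norm f := by
  let g : lp (fun _ : I => ℂ) 2 := ⟨f, memℓp_of_finite_support hf 2⟩
  have coe_image : ⇑(F.lconvCLM γ g) = F.lconv γ f := F.coe_lconvCLM_apply γ g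
  have finite_support_image : (⇑(F.lconvCLM γ g)).support.Finite :=
    coe_image ▸ F.finite_support_lconv γ hf
  calc l2norm (F.lconv γ f) = ‖F.lconvCLM γ g‖ := by
        rw [← coe_image, l2norm_eq_norm _ finite_support_image]
    _ ≤ 1 * ‖g‖ := (F.lconvCLM γ).le_of_opNorm_le (F.norm_lconvCLM_le_one γ) g
    _ = l2norm f := by rw [one_mul, ← l2norm_eq_norm g hf]

end FusionDatum

theorem stmt3_general {I : Type*} (F : FusionDatum I) (γ : I) :
    (∃ L : lp (fun _ : I => ℂ) 2 →L[ℂ] lp (fun _ : I => ℂ) 2,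
      ‖L‖ ≤ 1 ∧
      ∀ f : lp (fun _ : I => ℂ) 2, ∀ β : I,
        (L f : ∀ _ : I, ℂ) β
          = (1 / (F.d γ : ℂ)) * ∑ᶠ η, (F.N γ η β : ℂ) * (f : ∀ _ : I, ℂ) η) ∧
    ∀ f : I → ℂ, (Function.support f).Finite → l2norm (F.lconv γ f) ≤ l2norm f :=
  ⟨⟨F.lconvCLM γ, F.norm_lconvCLM_le_one γ, fun f => congrFun (F.coe_lconvCLM_apply γ f)⟩,
    fun _ => F.l2norm_lconv_le γ⟩

/-- for every `γ`, the formula `(L_γ f)(β) = (1/(d γ))·Σ_η N γ η β · f η`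
defines a bounded linear operator on `ℓ²(I)` of norm at most `1`; in particular
`‖l_γ f‖₂ ≤ ‖f‖₂` for every finitely supported `f : I → ℂ`. -/
theorem stmt3 {I : Type*} [Countable I] (F : FusionDatum I) (γ : I) :
    (∃ L : lp (fun _ : I => ℂ) 2 →L[ℂ] lp (fun _ : I => ℂ) 2,
      ‖L‖ ≤ 1 ∧
      ∀ f : lp (fun _ : I => ℂ) 2, ∀ β : I,
        (L f : ∀ _ : I, ℂ) β
          = (1 / (F.d γ : ℂ)) * ∑ᶠ η, (F.N γ η β : ℂ) * (f : ∀ _ : I, ℂ) η) ∧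
    ∀ f : I → ℂ, (Function.support f).Finite → l2norm (F.lconv γ f) ≤ l2norm f :=
  stmt3_general F γ
end

section
/- Let a fusion datum be given on a countable type I, let A be a unital C*-algebra, let σ_γ : A → A (γ ∈ I) be ℂ-linear maps, and let φ be a state on A with φ(σ_γ(a)) = φ(a) for all γ ∈ I and a ∈ A. Let (ξ_n) be a sequence of finitely supported functions I → A such that ‖δ_γ *_σ ξ_n − ξ_n‖_{2,A} → 0 as n → ∞ for every γ ∈ I. Define η_n : I → ℂ by η_n(α) := φ(ξ_n(α)). Then ‖η_n‖₂ ≤ ‖ξ_n‖_{2,A} for every n, and for every γ ∈ I one has ‖l_γ η_n − η_n‖₂ → 0 as n → ∞. -/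
open scoped BigOperators
open Filter
open scoped Classical

/-!
Expanding `0 ≤ φ((a + c)* (a + c))` for scalars `c` shows that a state `φ` is hermitian and that
`|φ(a)|² ≤ φ(a a*)`. Moreover `φ(x) ≤ ‖x‖` for self-adjoint `x`, because `‖x‖ - x` has the form
`b* b`. Summing over the coordinates of `f : I → A` gives
`‖φ ∘ f‖₂² ≤ φ(⟨f|f⟩_A) ≤ ‖⟨f|f⟩_A‖`, so applying `φ` coordinatewise is a contraction. Invariance of
`φ` under `σ` turns twisted convolution by `δ_γ` into `l_γ`, and the contraction is then applied to
`δ_γ *_σ f - f`.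
-/

theorem isSelfAdjoint_innerA {I A : Type*} [NormedRing A] [StarRing A] (f : I → A) :
    IsSelfAdjoint (innerA f) := by
  have star_finsum := (starAddEquiv (R := A)).map_finsum fun α => f α * star (f α)
  simpa only [IsSelfAdjoint, innerA, starAddEquiv_apply, star_mul, star_star] using star_finsum

namespace CStarState

variable {A : Type*} [NormedRing A] [StarRing A] [NormedAlgebra ℂ A]

section StarModule

variable [StarModule ℂ A] (φ : CStarState A)

theorem map_star_mul_self_add_smul_one (a : A) (c : ℂ) :
    φ.toFun (star (a + c • 1) * (a + c • 1)) =
      φ.toFun (star a * a) + c * φ.toFun (star a) + star c * φ.toFun a + star c * c := by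
  simp only [star_add, star_smul, star_one, add_mul, mul_add, smul_mul_assoc, mul_smul_comm,
    mul_one, one_mul, map_add, map_smul, φ.map_one, smul_eq_mul]
  ring

theorem map_star (a : A) : φ.toFun (star a) = star (φ.toFun a) := by
  have im_cross_eq_zero (c : ℂ) : (c * φ.toFun (star a) + star c * φ.toFun a).im = 0 := by
    have expansion := congrArg Complex.im (φ.map_star_mul_self_add_smul_one a c)
    rw [(φ.pos _).2] at expansion
    simp only [Complex.add_im, (φ.pos a).2, Complex.star_def, ← Complex.normSq_eq_conj_mul_self,
      Complex.ofReal_im] at expansion ⊢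
    linarith
  have im_eq := im_cross_eq_zero 1
  have re_eq := im_cross_eq_zero Complex.I
  simp only [Complex.add_im, Complex.mul_im, Complex.star_def, Complex.conj_I, Complex.neg_im,
    Complex.I_re, Complex.I_im, one_mul, star_one, zero_mul, zero_add, neg_mul] at im_eq re_eq
  apply Complex.ext
  · rw [Complex.star_def, Complex.conj_re]
    linarith
  · rw [Complex.star_def, Complex.conj_im]
    linarith

theorem norm_sq_le_re_map_mul_star_self (a : A) :
    ‖φ.toFun a‖ ^ 2 ≤ (φ.toFun (a * star a)).re := by
  have defect : φ.toFun (star (star a + (-star (φ.toFun a)) • 1) *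
      (star a + (-star (φ.toFun a)) • 1)) = φ.toFun (a * star a) - (‖φ.toFun a‖ ^ 2 : ℝ) := by
    rw [map_star_mul_self_add_smul_one, star_star, map_star, ← Complex.normSq_eq_norm_sq,
      Complex.normSq_eq_conj_mul_self, Complex.star_def]
    simp only [map_neg, Complex.conj_conj]
    ring
  have nonneg := (φ.pos (star a + (-star (φ.toFun a)) • 1)).1
  rw [defect, Complex.sub_re, Complex.ofReal_re] at nonneg
  linarith

end StarModule

theorem re_map_innerA {I : Type*} (φ : CStarState A) {f : I → A} (hf : f.HasFiniteSupport) :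
    (φ.toFun (innerA f)).re = ∑ᶠ α, (φ.toFun (f α * star (f α))).re :=
  map_finsum (Complex.reLm.comp (φ.toFun.restrictScalars ℝ)) (hf.fun_mul_left _)

variable [CStarRing A] [StarModule ℂ A] [CompleteSpace A]

theorem re_map_le_norm (φ : CStarState A) {a : A} (ha : IsSelfAdjoint a) :
    (φ.toFun a).re ≤ ‖a‖ := by
  let : CStarAlgebra A := {}
  let := CStarAlgebra.spectralOrder A
  let := CStarAlgebra.spectralOrderedRing A
  obtain ⟨b, hb⟩ := CStarAlgebra.nonneg_iff_eq_star_mul_self.mp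
    (sub_nonneg.mpr ha.le_algebraMap_norm_self)
  have map_gap : φ.toFun (algebraMap ℝ A ‖a‖ - a) = ‖a‖ - φ.toFun a := by
    rw [map_sub, IsScalarTower.algebraMap_apply ℝ ℂ A, Algebra.algebraMap_eq_smul_one, map_smul,
      φ.map_one, smul_eq_mul, mul_one, Complex.coe_algebraMap]
  have nonneg := (φ.pos b).1
  rwa [← hb, map_gap, Complex.sub_re, Complex.ofReal_re, sub_nonneg] at nonneg

theorem l2norm_comp_le_norm2A {I : Type*} (φ : CStarState A) {f : I → A}
    (hf : f.HasFiniteSupport) : l2norm (fun α => φ.toFun (f α)) ≤ norm2A f := by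
  apply Real.sqrt_le_sqrt
  calc ∑ᶠ α, ‖φ.toFun (f α)‖ ^ 2
      ≤ ∑ᶠ α, (φ.toFun (f α * star (f α))).re :=
        finsum_le_finsum'
          (hf.fun_comp (g := fun a => ‖φ.toFun a‖ ^ 2) (by simp))
          (hf.fun_comp (g := fun a => (φ.toFun (a * star a)).re) (by simp))
          fun α => φ.norm_sq_le_re_map_mul_star_self (f α)
    _ = (φ.toFun (innerA f)).re := (φ.re_map_innerA hf).symm
    _ ≤ ‖innerA f‖ := φ.re_map_le_norm (isSelfAdjoint_innerA f)

end CStarState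

namespace FusionDatum

variable {I : Type*} (F : FusionDatum I)

theorem hasFiniteSupport_N (α β : I) : (F.N α β).HasFiniteSupport := by
  refine (F.mul_support_finite α β).subset fun γ hγ => ?_
  have d_pos : 0 < F.d γ := zero_lt_one.trans_le (F.one_le_d γ)
  exact mul_ne_zero (Nat.cast_ne_zero.mpr hγ) d_pos.ne'

theorem hasFiniteSupport_N_middle (α γ : I) : (fun β => F.N α β γ).HasFiniteSupport := by
  simpa only [F.frobenius₂ α _ γ] using F.hasFiniteSupport_N (F.conj α) γ

variable {A : Type*} [NormedRing A] [NormedAlgebra ℂ A] (σ : I → A → A)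

theorem hasFiniteSupport_tconv {γ : I} (hσ : σ γ 0 = 0) {f : I → A} (hf : f.HasFiniteSupport) :
    (F.tconv σ γ f).HasFiniteSupport := by
  refine (hf.biUnion fun η _ => F.hasFiniteSupport_N γ η).subset fun β hβ => ?_
  contrapose! hβ
  have summand_eq_zero (η : I) : F.N γ η β • σ γ (f η) = 0 := by
    by_cases hη : f η = 0
    · rw [hη, hσ, smul_zero]
    · have N_eq_zero : F.N γ η β = 0 := by
        by_contra hN
        exact hβ (Set.mem_biUnion hη hN)
      rw [N_eq_zero, zero_smul]
  simp only [Function.notMem_support, tconv, summand_eq_zero, finsum_zero, smul_zero]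

variable [StarRing A] {φ : CStarState A}

theorem map_tconv {γ : I} (hinv : ∀ a, φ.toFun (σ γ a) = φ.toFun a) (f : I → A) (β : I) :
    φ.toFun (F.tconv σ γ f β) = F.lconv γ (fun α => φ.toFun (f α)) β := by
  have map_sum : φ.toFun (∑ᶠ η, F.N γ η β • σ γ (f η)) =
      ∑ᶠ η, (F.N γ η β : ℂ) * φ.toFun (f η) := by
    rw [map_finsum φ.toFun ((F.hasFiniteSupport_N_middle γ β).fun_smul_left _)]
    exact finsum_congr fun η => by rw [map_nsmul, hinv, nsmul_eq_mul]
  rw [tconv, map_smul, map_sum, lconv, one_div, Complex.ofReal_inv, smul_eq_mul]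

theorem l2norm_lconv_sub_le [CStarRing A] [StarModule ℂ A] [CompleteSpace A] {γ : I}
    (hσ : σ γ 0 = 0) (hinv : ∀ a, φ.toFun (σ γ a) = φ.toFun a) {f : I → A}
    (hf : f.HasFiniteSupport) :
    l2norm (F.lconv γ (fun α => φ.toFun (f α)) - fun α => φ.toFun (f α)) ≤
      norm2A (F.tconv σ γ f - f) := by
  have intertwine : (F.lconv γ (fun α => φ.toFun (f α)) - fun α => φ.toFun (f α)) =
      fun β => φ.toFun ((F.tconv σ γ f - f) β) := by
    funext β
    rw [Pi.sub_apply, Pi.sub_apply, map_sub, F.map_tconv σ hinv]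
  rw [intertwine]
  exact φ.l2norm_comp_le_norm2A ((F.hasFiniteSupport_tconv σ hσ hf).sub hf)

end FusionDatum

theorem stmt9_general {I ι : Type*} {l : Filter ι} (F : FusionDatum I)
    {A : Type*} [NormedRing A] [StarRing A] [CStarRing A] [NormedAlgebra ℂ A]
    [StarModule ℂ A] [CompleteSpace A]
    (σ : I → A → A) (hσ : ∀ γ, σ γ 0 = 0) (φ : CStarState A)
    (hinv : ∀ (γ : I) (a : A), φ.toFun (σ γ a) = φ.toFun a)
    (ξ : ι → I → A) (hsupp : ∀ i, (Function.support (ξ i)).Finite)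
    (hconv : ∀ γ : I, Tendsto (fun i => norm2A (F.tconv σ γ (ξ i) - ξ i)) l (nhds 0)) :
    (∀ i, l2norm (fun α => φ.toFun (ξ i α)) ≤ norm2A (ξ i)) ∧
    ∀ γ : I, Tendsto
      (fun i => l2norm (F.lconv γ (fun α => φ.toFun (ξ i α)) - fun α => φ.toFun (ξ i α)))
      l (nhds 0) :=
  ⟨fun i => φ.l2norm_comp_le_norm2A (hsupp i), fun γ =>
    squeeze_zero (fun _ => Real.sqrt_nonneg _)
      (fun i => F.l2norm_lconv_sub_le σ (hσ γ) (hinv γ) (hsupp i)) (hconv γ)⟩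

/-- applying a `σ`-invariant state coordinatewise to an `A`-valued
Følner-type sequence produces a scalar sequence with `‖η_n‖₂ ≤ ‖ξ_n‖_{2,A}` and
`‖l_γ η_n − η_n‖₂ → 0` for every `γ`. -/
theorem stmt9 {I : Type*} [Countable I] (F : FusionDatum I)
    {A : Type*} [NormedRing A] [StarRing A] [CStarRing A] [NormedAlgebra ℂ A]
    [StarModule ℂ A] [CompleteSpace A]
    (σ : I → A →ₗ[ℂ] A) (φ : CStarState A)
    (hinv : ∀ (γ : I) (a : A), φ.toFun (σ γ a) = φ.toFun a)
    (ξ : ℕ → I → A) (hsupp : ∀ n, (Function.support (ξ n)).Finite)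
    (hconv : ∀ γ : I, Tendsto
      (fun n => norm2A (F.tconv (fun γ' => ⇑(σ γ')) γ (ξ n) - ξ n)) atTop (nhds 0)) :
    (∀ n, l2norm (fun α => φ.toFun (ξ n α)) ≤ norm2A (ξ n)) ∧
    ∀ γ : I, Tendsto
      (fun n => l2norm (F.lconv γ (fun α => φ.toFun (ξ n α)) - fun α => φ.toFun (ξ n α)))
      atTop (nhds 0) :=
  stmt9_general F (fun γ => σ γ) (fun γ => map_zero (σ γ)) φ hinv ξ hsupp hconv
end
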